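/- The following three statements are equivalent: (i) Σ_K is mean square stable; (ii) Σ̄_K is mean square stable; (iii) there exist symmetric positive definite matrices Q_χ ∈ ℝ^{n×n} for every χ ∈ 𝔛 such that Q_χ − D̄_χ(A_K Q A_Kᵀ) is positive definite for every χ ∈ 𝔛, where (A_K Q A_Kᵀ)_χ = A_{K,χ} Q_χ A_{K,χ}ᵀ. -/

import Mathlib

open MeasureTheory ProbabilityTheory Matrix

noncomputable section

/-- The state space `[N] × [M] × [N] × [T]` of the extended process `r̄`.
`Fin N`, `Fin M`, `Fin T` play the roles of `[N] = {1,…,N}`, `[M]`, `[T]`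
(with `Fin T` being the 0-indexed version of `[T] = {1,…,T}`, i.e. `δ ∈ [T]`
corresponds to `δ - 1 : Fin T`). -/
abbrev XT (NN MM T : ℕ) : Type := Fin NN × Fin MM × Fin NN × Fin T

/-- `X` is a time-homogeneous Markov chain with transition probability matrix `P`:
for every `k`, every state `j` and every sequence of states `i`,
`Pr(X(k+1) = j ∧ X(l) = i l for all l ≤ k) = P (i k) j * Pr(X(l) = i l for all l ≤ k)`. -/
def IsMarkovChain {Ω : Type} {_mΩ : MeasurableSpace Ω} (μ : Measure Ω) {S : Type}
    (X : ℕ → Ω → S) (P : S → S → ℝ) : Prop :=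
  ∀ (k : ℕ) (j : S) (i : ℕ → S),
    (μ {ω | X (k + 1) ω = j ∧ ∀ l ≤ k, X l ω = i l}).toReal
      = P (i k) j * (μ {ω | ∀ l ≤ k, X l ω = i l}).toReal

/-- `⌊m⌋_T`, the unique element of `{0,…,T-1}` congruent to `m` modulo `T`, as `Fin T`. -/
def intToFin (T : ℕ) [NeZero T] (a : ℤ) : Fin T :=
  ⟨(a % (T : ℤ)).toNat, by
    have hT : 0 < (T : ℤ) := by
      exact_mod_cast Nat.pos_of_ne_zero (NeZero.ne T)
    have h1 : 0 ≤ a % (T : ℤ) := Int.emod_nonneg a (by omega)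
    have h2 : a % (T : ℤ) < (T : ℤ) := Int.emod_lt_of_pos a hT
    omega⟩

-- `τ(k)`: the most recent observation time `≤ k` (i.e. the largest `j ≤ k` with
-- `f(s(j)) = 1`), or `τ₀` if no observation has occurred up to time `k` (`k < t₀`).
open Classical in
def tauZ {Ω : Type} {MM : ℕ} (s : ℕ → Ω → Fin MM) (f : Fin MM → Bool)
    (τ₀ : ℤ) (k : ℕ) (ω : Ω) : ℤ :=
  if ∃ j ≤ k, f (s j ω) = true
  then ((Nat.findGreatest (fun j => f (s j ω) = true) k : ℕ) : ℤ)
  else τ₀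

-- `σ(k) = r(τ(k))` if an observation occurred by time `k` (i.e. `k ≥ t₀`), else `σ₀`.
open Classical in
def sigmaProc {Ω : Type} {NN MM : ℕ} (r : ℕ → Ω → Fin NN) (s : ℕ → Ω → Fin MM)
    (f : Fin MM → Bool) (σ₀ : Fin NN) (k : ℕ) (ω : Ω) : Fin NN :=
  if ∃ j ≤ k, f (s j ω) = true
  then r (Nat.findGreatest (fun j => f (s j ω) = true) k) ω
  else σ₀

/-- `ρ(k) = ⌊k - τ(k)⌋_T + 1 ∈ [T]`, represented 0-indexed as `⌊k - τ(k)⌋_T : Fin T`. -/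
def rhoProc {Ω : Type} {MM T : ℕ} [NeZero T] (s : ℕ → Ω → Fin MM) (f : Fin MM → Bool)
    (τ₀ : ℤ) (k : ℕ) (ω : Ω) : Fin T :=
  intToFin T ((k : ℤ) - tauZ s f τ₀ k ω)

/-- The extended process `r̄(k) = (r(k), s(k), σ(k), ρ(k))`. -/
def rbarProc {Ω : Type} {NN MM T : ℕ} [NeZero T] (r : ℕ → Ω → Fin NN)
    (s : ℕ → Ω → Fin MM) (f : Fin MM → Bool) (τ₀ : ℤ) (σ₀ : Fin NN)
    (k : ℕ) (ω : Ω) : XT NN MM T :=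
  (r k ω, s k ω, sigmaProc r s f σ₀ k ω, rhoProc s f τ₀ k ω)

/-- Membership in `𝔛`: if `f(β) = 1` then `α = γ` and `δ = 1` (0-indexed: `δ = 0`). -/
def inX {NN MM T : ℕ} [NeZero T] (f : Fin MM → Bool) (χ : XT NN MM T) : Prop :=
  f χ.2.1 = true → χ.1 = χ.2.2.1 ∧ χ.2.2.2 = 0

/-- The transition probabilities `p̄_{χχ'}` of the extended chain. The condition
`⌊δ' - δ - 1⌋_T = 0` for `δ, δ' ∈ [T]` is, in 0-indexed form, `δ' = δ + 1` in `Fin T`. -/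
def pbar {NN MM T : ℕ} [NeZero T] (P : Matrix (Fin NN) (Fin NN) ℝ)
    (Q : Matrix (Fin MM) (Fin MM) ℝ) (f : Fin MM → Bool) (χ χ' : XT NN MM T) : ℝ :=
  (if f χ'.2.1 = true
    then (if χ'.1 = χ'.2.2.1 ∧ χ'.2.2.2 = 0 then (1 : ℝ) else 0)
    else (if χ'.2.2.1 = χ.2.2.1 ∧ χ'.2.2.2 = χ.2.2.2 + 1 then (1 : ℝ) else 0))
  * P χ.1 χ'.1 * Q χ.2.1 χ'.2.1

/-- The state trajectory of the closed-loop system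
`x(k+1) = A(mode(k)) x(k) + E(mode(k)) w(k)`, `x(0) = x₀`. -/
def traj {Ω S : Type} {n q : ℕ}
    (Amat : S → Matrix (Fin n) (Fin n) ℝ) (Emat : S → Matrix (Fin n) (Fin q) ℝ)
    (mode : ℕ → Ω → S) (w : ℕ → Ω → Fin q → ℝ) (x0 : Fin n → ℝ) : ℕ → Ω → Fin n → ℝ
  | 0, _ => x0
  | (k + 1), ω =>
      (Amat (mode k ω)).mulVec (traj Amat Emat mode w x0 k ω)
        + (Emat (mode k ω)).mulVec (w k ω)

/-- `A_{K,χ} = A_α + B_α K_{γ,δ}`. -/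
def AKmat {NN MM T n m : ℕ} (A : Fin NN → Matrix (Fin n) (Fin n) ℝ)
    (B : Fin NN → Matrix (Fin n) (Fin m) ℝ)
    (K : Fin NN → Fin T → Matrix (Fin m) (Fin n) ℝ) (χ : XT NN MM T) :
    Matrix (Fin n) (Fin n) ℝ :=
  A χ.1 + B χ.1 * K χ.2.2.1 χ.2.2.2

/-- `C_{K,χ} = C_α + D_α K_{γ,δ}`. -/
def CKmat {NN MM T n m ℓ : ℕ} (C : Fin NN → Matrix (Fin ℓ) (Fin n) ℝ)
    (D : Fin NN → Matrix (Fin ℓ) (Fin m) ℝ)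
    (K : Fin NN → Fin T → Matrix (Fin m) (Fin n) ℝ) (χ : XT NN MM T) :
    Matrix (Fin ℓ) (Fin n) ℝ :=
  C χ.1 + D χ.1 * K χ.2.2.1 χ.2.2.2

/-- Squared Euclidean norm of a vector, as an extended nonnegative real. -/
def sqE {d : ℕ} (v : Fin d → ℝ) : ENNReal := ENNReal.ofReal (∑ i, (v i) ^ 2)

-- The operator `D̄_χ(R) = ∑_{χ' ∈ 𝔛} p̄_{χ'χ} R_{χ'}`.
open Classical in
def Dop {NN MM T n : ℕ} [NeZero T] (P : Matrix (Fin NN) (Fin NN) ℝ)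
    (Q : Matrix (Fin MM) (Fin MM) ℝ) (f : Fin MM → Bool)
    (R : XT NN MM T → Matrix (Fin n) (Fin n) ℝ) (χ : XT NN MM T) :
    Matrix (Fin n) (Fin n) ℝ :=
  ∑ χ' : XT NN MM T, if inX f χ' then pbar P Q f χ' χ • R χ' else 0

-- The operator `F̄_χ(Z) = ∑_{χ' ∈ 𝔛} p̄_{χχ'} Z_{χ,χ'}`.
open Classical in
def Fop {NN MM T n : ℕ} [NeZero T] (P : Matrix (Fin NN) (Fin NN) ℝ)
    (Q : Matrix (Fin MM) (Fin MM) ℝ) (f : Fin MM → Bool)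
    (Z : XT NN MM T → XT NN MM T → Matrix (Fin n) (Fin n) ℝ) (χ : XT NN MM T) :
    Matrix (Fin n) (Fin n) ℝ :=
  ∑ χ' : XT NN MM T, if inX f χ' then pbar P Q f χ χ' • Z χ χ' else 0

/-- A pair `(γ,δ) ∈ [N] × [T]` is admissible if `(α,β,γ,δ) ∈ 𝔛` for some `α, β`. -/
def Admissible {NN MM T : ℕ} [NeZero T] (f : Fin MM → Bool) (g : Fin NN) (d : Fin T) : Prop :=
  ∃ (α : Fin NN) (β : Fin MM), inX (T := T) f (α, β, g, d)

/-- A realization, on some probability space, of the pair of independent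
time-homogeneous Markov chains `(r, s)` with transition matrices `P` and `Q`. -/
structure MJLSReal (NN MM : ℕ) (P : Matrix (Fin NN) (Fin NN) ℝ)
    (Q : Matrix (Fin MM) (Fin MM) ℝ) : Type 1 where
  Ω : Type
  inst : MeasurableSpace Ω
  μ : @Measure Ω inst
  prob : IsProbabilityMeasure μ
  r : ℕ → Ω → Fin NN
  s : ℕ → Ω → Fin MM
  meas_r : ∀ k, Measurable[inst] (r k)
  meas_s : ∀ k, Measurable[inst] (s k)
  markov_r : IsMarkovChain μ r fun i j => P i j
  markov_s : IsMarkovChain μ s fun i j => Q i j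
  indep : IndepFun (fun ω l => r l ω) (fun ω l => s l ω) μ

/-- A realization, on some probability space, of a time-homogeneous Markov chain `θ`
taking values in `𝔛` with transition probabilities `p̄`. -/
structure ThetaReal (NN MM T : ℕ) [NeZero T] (P : Matrix (Fin NN) (Fin NN) ℝ)
    (Q : Matrix (Fin MM) (Fin MM) ℝ) (f : Fin MM → Bool) : Type 1 where
  Ω : Type
  inst : MeasurableSpace Ω
  μ : @Measure Ω inst
  prob : IsProbabilityMeasure μ
  θ : ℕ → Ω → XT NN MM T
  meas : ∀ k, Measurable[inst] (θ k)
  mem : ∀ k ω, inX f (θ k ω)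
  markov : IsMarkovChain μ θ (pbar P Q f)

/-- Mean square stability of the closed-loop system `Σ_K`: there are `c > 0` and
`λ ∈ [0,1)` such that for every realization, every deterministic initialization
(`r(0) = r₀`, `s(0) = s₀` a.s., together with `σ₀` and `τ₀ ≤ 0`, so that `r̄(0)`
is a deterministic element of `𝔛`), every `x₀` and every `k`,
`E[‖x(k)‖²] ≤ c λ^k ‖x₀‖²` (with `w ≡ 0`). -/
def MeanSquareStable {NN MM T n m q : ℕ} [NeZero T]
    (P : Matrix (Fin NN) (Fin NN) ℝ) (Qm : Matrix (Fin MM) (Fin MM) ℝ) (f : Fin MM → Bool)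
    (A : Fin NN → Matrix (Fin n) (Fin n) ℝ) (B : Fin NN → Matrix (Fin n) (Fin m) ℝ)
    (E : Fin NN → Matrix (Fin n) (Fin q) ℝ)
    (K : Fin NN → Fin T → Matrix (Fin m) (Fin n) ℝ) : Prop :=
  ∃ c : ℝ, 0 < c ∧ ∃ lam : ℝ, 0 ≤ lam ∧ lam < 1 ∧
    ∀ (S : MJLSReal NN MM P Qm) (τ₀ : ℤ), τ₀ ≤ 0 →
      ∀ (σ₀ r₀ : Fin NN) (s₀ : Fin MM),
        (∀ᵐ ω ∂S.μ, S.r 0 ω = r₀ ∧ S.s 0 ω = s₀) →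
        ∀ (x0 : Fin n → ℝ) (k : ℕ),
          (∫⁻ ω, sqE (traj (AKmat A B K) (fun χ => E χ.1)
              (rbarProc S.r S.s f τ₀ σ₀) (fun _ _ => 0) x0 k ω) ∂S.μ)
            ≤ ENNReal.ofReal (c * lam ^ k * ∑ i, (x0 i) ^ 2)

/-- Mean square stability of `Σ̄_K` (the system driven by the chain `θ`). -/
def MeanSquareStableBar {NN MM T n m q : ℕ} [NeZero T]
    (P : Matrix (Fin NN) (Fin NN) ℝ) (Qm : Matrix (Fin MM) (Fin MM) ℝ) (f : Fin MM → Bool)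
    (A : Fin NN → Matrix (Fin n) (Fin n) ℝ) (B : Fin NN → Matrix (Fin n) (Fin m) ℝ)
    (E : Fin NN → Matrix (Fin n) (Fin q) ℝ)
    (K : Fin NN → Fin T → Matrix (Fin m) (Fin n) ℝ) : Prop :=
  ∃ c : ℝ, 0 < c ∧ ∃ lam : ℝ, 0 ≤ lam ∧ lam < 1 ∧
    ∀ (S : ThetaReal NN MM T P Qm f) (χ : XT NN MM T), inX f χ →
      (∀ᵐ ω ∂S.μ, S.θ 0 ω = χ) →
      ∀ (x0 : Fin n → ℝ) (k : ℕ),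
        (∫⁻ ω, sqE (traj (AKmat A B K) (fun χ' => E χ'.1) S.θ (fun _ _ => 0) x0 k ω) ∂S.μ)
          ≤ ENNReal.ofReal (c * lam ^ k * ∑ i, (x0 i) ^ 2)

/-- The impulse disturbance `w = e_i φ`, i.e. `w(0) = e_i` and `w(k) = 0` for `k ≥ 1`. -/
def impulse {Ω : Type} (q : ℕ) (i : Fin q) : ℕ → Ω → Fin q → ℝ :=
  fun k _ j => if k = 0 ∧ j = i then 1 else 0

/-- `∑_k E[‖z(k; 0, χ, e_i φ)‖²]` for `Σ_K` on a given realization with data `(τ₀, σ₀)`. -/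
def H2TermSigma {NN MM T n m q ℓ : ℕ} [NeZero T]
    {P : Matrix (Fin NN) (Fin NN) ℝ} {Qm : Matrix (Fin MM) (Fin MM) ℝ}
    (S : MJLSReal NN MM P Qm) (f : Fin MM → Bool) (τ₀ : ℤ) (σ₀ : Fin NN)
    (A : Fin NN → Matrix (Fin n) (Fin n) ℝ) (B : Fin NN → Matrix (Fin n) (Fin m) ℝ)
    (C : Fin NN → Matrix (Fin ℓ) (Fin n) ℝ) (D : Fin NN → Matrix (Fin ℓ) (Fin m) ℝ)
    (E : Fin NN → Matrix (Fin n) (Fin q) ℝ)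
    (K : Fin NN → Fin T → Matrix (Fin m) (Fin n) ℝ) (i : Fin q) : ENNReal :=
  ∑' k : ℕ, ∫⁻ ω, sqE ((CKmat C D K (rbarProc S.r S.s f τ₀ σ₀ k ω)).mulVec
      (traj (AKmat A B K) (fun χ => E χ.1) (rbarProc S.r S.s f τ₀ σ₀)
        (impulse q i) 0 k ω)) ∂S.μ

-- `‖Σ_K‖₂² < γ`, where `‖Σ_K‖₂² = ∑_{i=1}^q ∑_{χ ∈ 𝔛} μ̄(χ) ‖z(⬝;0,χ,e_iφ)‖₂²` and the
-- expectations are over arbitrary realizations with deterministic initialization `r̄(0) = χ`.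
open Classical in
def H2SqLtSigma {NN MM T n m q ℓ : ℕ} [NeZero T]
    (P : Matrix (Fin NN) (Fin NN) ℝ) (Qm : Matrix (Fin MM) (Fin MM) ℝ) (f : Fin MM → Bool)
    (A : Fin NN → Matrix (Fin n) (Fin n) ℝ) (B : Fin NN → Matrix (Fin n) (Fin m) ℝ)
    (C : Fin NN → Matrix (Fin ℓ) (Fin n) ℝ) (D : Fin NN → Matrix (Fin ℓ) (Fin m) ℝ)
    (E : Fin NN → Matrix (Fin n) (Fin q) ℝ)
    (K : Fin NN → Fin T → Matrix (Fin m) (Fin n) ℝ)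
    (μbar : XT NN MM T → ℝ) (γ : ℝ) : Prop :=
  ∀ (S : Fin q → XT NN MM T → MJLSReal NN MM P Qm)
    (τ : Fin q → XT NN MM T → ℤ) (σv : Fin q → XT NN MM T → Fin NN),
    (∀ i χ, inX f χ → τ i χ ≤ 0 ∧
        (∀ᵐ ω ∂(S i χ).μ, rbarProc (S i χ).r (S i χ).s f (τ i χ) (σv i χ) 0 ω = χ)) →
    (∑ i : Fin q, ∑ χ : XT NN MM T,
        if inX f χ
        then ENNReal.ofReal (μbar χ) * H2TermSigma (S i χ) f (τ i χ) (σv i χ) A B C D E K i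
        else 0)
      < ENNReal.ofReal γ

/-- `∑_k E[‖z̄(k; 0, χ, e_i φ)‖²]` for `Σ̄_K` on a given realization of `θ`. -/
def H2TermBar {NN MM T n m q ℓ : ℕ} [NeZero T]
    {P : Matrix (Fin NN) (Fin NN) ℝ} {Qm : Matrix (Fin MM) (Fin MM) ℝ} {f : Fin MM → Bool}
    (S : ThetaReal NN MM T P Qm f)
    (A : Fin NN → Matrix (Fin n) (Fin n) ℝ) (B : Fin NN → Matrix (Fin n) (Fin m) ℝ)
    (C : Fin NN → Matrix (Fin ℓ) (Fin n) ℝ) (D : Fin NN → Matrix (Fin ℓ) (Fin m) ℝ)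
    (E : Fin NN → Matrix (Fin n) (Fin q) ℝ)
    (K : Fin NN → Fin T → Matrix (Fin m) (Fin n) ℝ) (i : Fin q) : ENNReal :=
  ∑' k : ℕ, ∫⁻ ω, sqE ((CKmat C D K (S.θ k ω)).mulVec
      (traj (AKmat A B K) (fun χ => E χ.1) S.θ (impulse q i) 0 k ω)) ∂S.μ

-- `‖Σ̄_K‖₂² < γ` (the `H₂` norm of `Σ̄_K`, defined with `θ` in place of `r̄`).
open Classical in
def H2SqLtBar {NN MM T n m q ℓ : ℕ} [NeZero T]
    (P : Matrix (Fin NN) (Fin NN) ℝ) (Qm : Matrix (Fin MM) (Fin MM) ℝ) (f : Fin MM → Bool)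
    (A : Fin NN → Matrix (Fin n) (Fin n) ℝ) (B : Fin NN → Matrix (Fin n) (Fin m) ℝ)
    (C : Fin NN → Matrix (Fin ℓ) (Fin n) ℝ) (D : Fin NN → Matrix (Fin ℓ) (Fin m) ℝ)
    (E : Fin NN → Matrix (Fin n) (Fin q) ℝ)
    (K : Fin NN → Fin T → Matrix (Fin m) (Fin n) ℝ)
    (μbar : XT NN MM T → ℝ) (γ : ℝ) : Prop :=
  ∀ (S : Fin q → XT NN MM T → ThetaReal NN MM T P Qm f),
    (∀ i χ, inX f χ → (∀ᵐ ω ∂(S i χ).μ, (S i χ).θ 0 ω = χ)) →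
    (∑ i : Fin q, ∑ χ : XT NN MM T,
        if inX f χ
        then ENNReal.ofReal (μbar χ) * H2TermBar (S i χ) A B C D E K i
        else 0)
      < ENNReal.ofReal γ

/-- The σ-algebra `Θ_k` generated by `r(0), s(0), …, r(k), s(k)`, for a realization. -/
def sigFiltSigma {NN MM : ℕ} {P : Matrix (Fin NN) (Fin NN) ℝ}
    {Q : Matrix (Fin MM) (Fin MM) ℝ} (S : MJLSReal NN MM P Q) (k : ℕ) :
    MeasurableSpace S.Ω :=
  ⨆ j ∈ Finset.range (k + 1),
    (MeasurableSpace.comap (S.r j) inferInstance ⊔ MeasurableSpace.comap (S.s j) inferInstance)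

/-- The σ-algebra generated by `θ(0), …, θ(k)`, for a realization of `θ`. -/
def sigFiltBar {NN MM T : ℕ} [NeZero T] {P : Matrix (Fin NN) (Fin NN) ℝ}
    {Q : Matrix (Fin MM) (Fin MM) ℝ} {f : Fin MM → Bool} (S : ThetaReal NN MM T P Q f)
    (k : ℕ) : MeasurableSpace S.Ω :=
  ⨆ j ∈ Finset.range (k + 1), MeasurableSpace.comap (S.θ j) inferInstance

/-- `Σ_K` satisfies `‖Σ_K‖∞² < γ`: there is `0 ≤ c < γ` such that `‖z‖₂² ≤ c ‖w‖₂²`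
for every realization, every deterministic initialization `r̄(0) = r̄₀ ∈ 𝔛`, and
every nonzero `w ∈ ℓ²(ℝ^q)` adapted to `(Θ_k)_k` (with `x₀ = 0`). -/
def HinfSqLtSigma {NN MM T n m q ℓ : ℕ} [NeZero T]
    (P : Matrix (Fin NN) (Fin NN) ℝ) (Qm : Matrix (Fin MM) (Fin MM) ℝ) (f : Fin MM → Bool)
    (A : Fin NN → Matrix (Fin n) (Fin n) ℝ) (B : Fin NN → Matrix (Fin n) (Fin m) ℝ)
    (C : Fin NN → Matrix (Fin ℓ) (Fin n) ℝ) (D : Fin NN → Matrix (Fin ℓ) (Fin m) ℝ)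
    (E : Fin NN → Matrix (Fin n) (Fin q) ℝ)
    (K : Fin NN → Fin T → Matrix (Fin m) (Fin n) ℝ) (γ : ℝ) : Prop :=
  ∃ c : ℝ, 0 ≤ c ∧ c < γ ∧
    ∀ (S : MJLSReal NN MM P Qm) (τ₀ : ℤ), τ₀ ≤ 0 → ∀ (σ₀ : Fin NN) (χ : XT NN MM T),
      inX f χ → (∀ᵐ ω ∂S.μ, rbarProc S.r S.s f τ₀ σ₀ 0 ω = χ) →
      ∀ (w : ℕ → S.Ω → Fin q → ℝ),
        (∀ k, Measurable[sigFiltSigma S k] (w k)) →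
        0 < (∑' k : ℕ, ∫⁻ ω, sqE (w k ω) ∂S.μ) →
        (∑' k : ℕ, ∫⁻ ω, sqE (w k ω) ∂S.μ) ≠ ⊤ →
        (∑' k : ℕ, ∫⁻ ω, sqE ((CKmat C D K (rbarProc S.r S.s f τ₀ σ₀ k ω)).mulVec
            (traj (AKmat A B K) (fun χ' => E χ'.1) (rbarProc S.r S.s f τ₀ σ₀) w 0 k ω)) ∂S.μ)
          ≤ ENNReal.ofReal c * (∑' k : ℕ, ∫⁻ ω, sqE (w k ω) ∂S.μ)

/-- `Σ̄_K` satisfies `‖Σ̄_K‖∞² < γ` (disturbances adapted to the filtration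
generated by `θ`). -/
def HinfSqLtBar {NN MM T n m q ℓ : ℕ} [NeZero T]
    (P : Matrix (Fin NN) (Fin NN) ℝ) (Qm : Matrix (Fin MM) (Fin MM) ℝ) (f : Fin MM → Bool)
    (A : Fin NN → Matrix (Fin n) (Fin n) ℝ) (B : Fin NN → Matrix (Fin n) (Fin m) ℝ)
    (C : Fin NN → Matrix (Fin ℓ) (Fin n) ℝ) (D : Fin NN → Matrix (Fin ℓ) (Fin m) ℝ)
    (E : Fin NN → Matrix (Fin n) (Fin q) ℝ)
    (K : Fin NN → Fin T → Matrix (Fin m) (Fin n) ℝ) (γ : ℝ) : Prop :=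
  ∃ c : ℝ, 0 ≤ c ∧ c < γ ∧
    ∀ (S : ThetaReal NN MM T P Qm f) (χ : XT NN MM T),
      inX f χ → (∀ᵐ ω ∂S.μ, S.θ 0 ω = χ) →
      ∀ (w : ℕ → S.Ω → Fin q → ℝ),
        (∀ k, Measurable[sigFiltBar S k] (w k)) →
        0 < (∑' k : ℕ, ∫⁻ ω, sqE (w k ω) ∂S.μ) →
        (∑' k : ℕ, ∫⁻ ω, sqE (w k ω) ∂S.μ) ≠ ⊤ →
        (∑' k : ℕ, ∫⁻ ω, sqE ((CKmat C D K (S.θ k ω)).mulVec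
            (traj (AKmat A B K) (fun χ' => E χ'.1) S.θ w 0 k ω)) ∂S.μ)
          ≤ ENNReal.ofReal c * (∑' k : ℕ, ∫⁻ ω, sqE (w k ω) ∂S.μ)

/-- The symmetric 4×4 block matrix appearing in the `H∞` LMI, with diagonal blocks
`D1, γ I_q, D3, I_ℓ`, sub-diagonal blocks `(3,1) = B31`, `(3,2) = B32`, `(4,1) = B41`,
the corresponding transposed blocks above the diagonal, and zeros elsewhere. -/
def hinfBlock {n q ℓ : ℕ} (γ : ℝ) (D1 D3 : Matrix (Fin n) (Fin n) ℝ)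
    (B31 : Matrix (Fin n) (Fin n) ℝ) (B32 : Matrix (Fin n) (Fin q) ℝ)
    (B41 : Matrix (Fin ℓ) (Fin n) ℝ) :
    Matrix ((Fin n ⊕ Fin q) ⊕ (Fin n ⊕ Fin ℓ)) ((Fin n ⊕ Fin q) ⊕ (Fin n ⊕ Fin ℓ)) ℝ :=
  Matrix.fromBlocks
    (Matrix.fromBlocks D1 0 0 (γ • (1 : Matrix (Fin q) (Fin q) ℝ)))
    (Matrix.fromBlocks B31ᵀ B41ᵀ B32ᵀ 0)
    (Matrix.fromBlocks B31 B32 B41 0)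
    (Matrix.fromBlocks D3 0 0 (1 : Matrix (Fin ℓ) (Fin ℓ) ℝ))

/-!
`r̄` is itself a Markov chain on `𝔛` with transition matrix `p̄`, because `(σ, ρ)(k + 1)` is a
function of `(σ, ρ)(k)` and `(r, s)(k + 1)`; so `Σ_K` and `Σ̄_K` are the same Markov jump system.
The second moments `R_χ(k) = 𝔼[x(k) x(k)ᵀ; mode(k) = χ]` evolve by the positive linear operator
`L : R ↦ D̄(A_K R A_Kᵀ)`, and every initial mode `(α, β, γ, δ) ∈ 𝔛` is realised by `r̄` with
`σ₀ = γ`, `τ₀ = -δ` (`δ` counted from `0`). Hence each of the two stability notions says that the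
powers of `L` decay exponentially on rank-one initial data. By positivity of `L` this is equivalent
to `Q - L Q > 0` for some `Q > 0`: such a `Q` satisfies `L Q ≤ λ Q` with `λ < 1`, and conversely a
long enough partial sum `Q = ∑ Lˡ 1` works.
-/

open scoped MatrixOrder

section MatrixFamilies

variable {ι n : Type*}

theorem posSemidef_vecMulVec_self [Finite n] (x : n → ℝ) : (vecMulVec x x).PosSemidef := by
  simpa only [star_trivial] using posSemidef_vecMulVec_self_star x

theorem posSemidef_le_trace_smul_one [Fintype n] [DecidableEq n] {M : Matrix n n ℝ}
    (hM : M.PosSemidef) : M ≤ M.trace • 1 := by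
  rw [← Algebra.algebraMap_eq_smul_one, le_algebraMap_iff_spectrum_le,
    hM.isHermitian.spectrum_real_eq_range_eigenvalues, hM.isHermitian.trace_eq_sum_eigenvalues]
  rintro _ ⟨i, rfl⟩
  exact Finset.single_le_sum (f := hM.isHermitian.eigenvalues)
    (fun j _ => hM.eigenvalues_nonneg j) (Finset.mem_univ i)

theorem posDef_iff_exists_smul_one_le [Finite n] [DecidableEq n] {D : Matrix n n ℝ} :
    D.PosDef ↔ ∃ r : ℝ, 0 < r ∧ r • 1 ≤ D := by
  cases nonempty_fintype n
  refine ⟨fun hD => ?_, fun ⟨r, hr, hrD⟩ => ?_⟩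
  · cases isEmpty_or_nonempty n
    · exact ⟨1, one_pos, (Subsingleton.elim _ _).le⟩
    simp only [← Algebra.algebraMap_eq_smul_one]
    refine (CFC.exists_pos_algebraMap_le_iff hD.isHermitian.isSelfAdjoint).2 ?_
    rw [hD.isHermitian.spectrum_real_eq_range_eigenvalues]
    rintro _ ⟨i, rfl⟩
    exact hD.eigenvalues_pos i
  · simpa only [add_sub_cancel] using (PosDef.one.smul hr).add_posSemidef (le_iff.1 hrD)

theorem exists_pos_smul_one_le [Finite ι] [Finite n] [DecidableEq n]
    {D : ι → Matrix n n ℝ} (hD : ∀ i, (D i).PosDef) : ∃ r : ℝ, 0 < r ∧ r • 1 ≤ D := by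
  cases nonempty_fintype n
  choose r hr hrD using fun i => posDef_iff_exists_smul_one_le.1 (hD i)
  cases isEmpty_or_nonempty ι
  · exact ⟨1, one_pos, isEmptyElim⟩
  obtain ⟨i₀, hi₀⟩ := Finite.exists_min r
  exact ⟨r i₀, hr i₀, fun i => (smul_le_smul_of_nonneg_right (hi₀ i) zero_le_one).trans (hrD i)⟩

section TotalTrace

variable [Fintype ι] [Fintype n]

/-- The sum of the traces of a finite family of square matrices. On families of positive
semidefinite matrices it is a norm for which no absolute values are needed. -/
def totalTrace : (ι → Matrix n n ℝ) →ₗ[ℝ] ℝ :=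
  ∑ i, traceLinearMap n ℝ ℝ ∘ₗ LinearMap.proj i

theorem totalTrace_apply (X : ι → Matrix n n ℝ) : totalTrace X = ∑ i, (X i).trace := by
  simp only [totalTrace, LinearMap.sum_apply, LinearMap.comp_apply, LinearMap.proj_apply,
    traceLinearMap_apply]

theorem totalTrace_nonneg {X : ι → Matrix n n ℝ} (hX : 0 ≤ X) : 0 ≤ totalTrace X := by
  rw [totalTrace_apply]
  exact Finset.sum_nonneg fun i _ => (nonneg_iff_posSemidef.1 (hX i)).trace_nonneg

theorem totalTrace_mono : Monotone (totalTrace : (ι → Matrix n n ℝ) → ℝ) := fun X Y h => by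
  rw [← sub_nonneg, ← map_sub]
  exact totalTrace_nonneg (sub_nonneg.2 h)

theorem totalTrace_single [DecidableEq ι] (i : ι) (M : Matrix n n ℝ) :
    totalTrace (Pi.single i M) = M.trace := by
  rw [totalTrace_apply,
    Fintype.sum_eq_single i fun j hj => by rw [Pi.single_eq_of_ne hj, trace_zero],
    Pi.single_eq_same]

theorem le_totalTrace_smul_one [DecidableEq n] {X : ι → Matrix n n ℝ} (hX : 0 ≤ X) :
    X ≤ totalTrace X • 1 := fun i => by
  have hX' : ∀ j, (X j).PosSemidef := fun j => nonneg_iff_posSemidef.1 (hX j)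
  refine (posSemidef_le_trace_smul_one (hX' i)).trans
    (smul_le_smul_of_nonneg_right ?_ zero_le_one)
  rw [totalTrace_apply]
  exact Finset.single_le_sum (fun j _ => (hX' j).trace_nonneg) (Finset.mem_univ i)

theorem posDef_one_sub [DecidableEq n] {X : ι → Matrix n n ℝ} (hX : 0 ≤ X)
    (htr : totalTrace X < 1) (χ : ι) : (1 - X χ).PosDef :=
  posDef_iff_exists_smul_one_le.2 ⟨1 - totalTrace X, sub_pos.2 htr, by
    rw [sub_smul, one_smul]
    exact sub_le_sub_left (le_totalTrace_smul_one hX χ) 1⟩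

end TotalTrace

theorem exists_pos_smul_le [Finite ι] [Finite n] {D R : ι → Matrix n n ℝ}
    (hD : ∀ i, (D i).PosDef) (hR : 0 ≤ R) : ∃ ε : ℝ, 0 < ε ∧ ε ≤ 1 ∧ ε • R ≤ D := by
  classical
  cases nonempty_fintype ι
  cases nonempty_fintype n
  obtain ⟨r, hr, hrD⟩ := exists_pos_smul_one_le hD
  have ht := totalTrace_nonneg hR
  have hrt : 0 < r + totalTrace R := by positivity
  refine ⟨r / (r + totalTrace R), by positivity, (div_le_one hrt).2 (by linarith), ?_⟩
  calc (r / (r + totalTrace R)) • R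
      ≤ (r / (r + totalTrace R)) • totalTrace R • (1 : ι → Matrix n n ℝ) :=
        smul_le_smul_of_nonneg_left (le_totalTrace_smul_one hR) (by positivity)
    _ = (r * (totalTrace R / (r + totalTrace R))) • (1 : ι → Matrix n n ℝ) := by
        rw [smul_smul]; ring_nf
    _ ≤ r • 1 := smul_le_smul_of_nonneg_right
        (mul_le_of_le_one_right hr.le ((div_le_one hrt).2 (by linarith))) zero_le_one
    _ ≤ D := hrD

theorem single_vecMulVec_le [Finite ι] [Fintype n] [DecidableEq ι] [DecidableEq n] (χ : ι)
    (x : n → ℝ) : (Pi.single χ (vecMulVec x x) : ι → Matrix n n ℝ) ≤ (x ⬝ᵥ x) • 1 := by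
  cases nonempty_fintype ι
  simpa only [totalTrace_single, trace_vecMulVec] using
    le_totalTrace_smul_one (Pi.single_nonneg (i := χ).2
      (nonneg_iff_posSemidef.2 (posSemidef_vecMulVec_self x)))

theorem one_eq_sum_single_vecMulVec [Fintype ι] [Fintype n] [DecidableEq ι] [DecidableEq n] :
    (1 : ι → Matrix n n ℝ) =
      ∑ χ, ∑ a : n, Pi.single χ (vecMulVec (Pi.single a 1) (Pi.single a 1)) := by
  have one_eq : (1 : Matrix n n ℝ) = ∑ a : n, vecMulVec (Pi.single a 1) (Pi.single a 1) := by
    ext i j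
    simp [Matrix.sum_apply, vecMulVec_apply, Pi.single_apply, Matrix.one_apply]
  calc (1 : ι → Matrix n n ℝ) = ∑ χ, Pi.single χ 1 := (Finset.univ_sum_single 1).symm
    _ = _ := Finset.sum_congr rfl fun χ _ => by
        rw [one_eq]
        exact map_sum (AddMonoidHom.single (fun _ : ι => Matrix n n ℝ) χ) _ _

end MatrixFamilies

section CovarianceOperator

variable {ι n : Type*} [Fintype ι] [Fintype n]

/-- The covariance operator `R ↦ (∑ χ', p χ' χ • A χ' * R χ' * (A χ')ᵀ)_χ` of the Markov jump
linear system `x(k+1) = A (θ k) x(k)`: it propagates the second moments of `x` split according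
to the current mode, `R χ = 𝔼[x xᵀ; θ = χ]`. -/
def covOp (p : ι → ι → ℝ) (A : ι → Matrix n n ℝ) : Module.End ℝ (ι → Matrix n n ℝ) :=
  LinearMap.pi fun χ => ∑ χ', p χ' χ •
    (LinearMap.mulRight ℝ (A χ')ᵀ ∘ₗ LinearMap.mulLeft ℝ (A χ') ∘ₗ LinearMap.proj χ')

variable {p : ι → ι → ℝ} {A : ι → Matrix n n ℝ}

theorem covOp_apply (p : ι → ι → ℝ) (A R : ι → Matrix n n ℝ) (χ : ι) :
    covOp p A R χ = ∑ χ', p χ' χ • (A χ' * R χ' * (A χ')ᵀ) := by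
  simp only [covOp, LinearMap.pi_apply, LinearMap.sum_apply, LinearMap.smul_apply,
    LinearMap.comp_apply, LinearMap.proj_apply, LinearMap.mulLeft_apply, LinearMap.mulRight_apply]

theorem covOp_nonneg (hp : ∀ i j, 0 ≤ p i j) {R : ι → Matrix n n ℝ} (hR : 0 ≤ R) :
    0 ≤ covOp p A R := fun χ => by
  rw [covOp_apply]
  refine Finset.sum_nonneg fun χ' _ => smul_nonneg (hp χ' χ) (nonneg_iff_posSemidef.2 ?_)
  simpa only [conjTranspose_eq_transpose_of_trivial] using
    (nonneg_iff_posSemidef.1 (hR χ')).mul_mul_conjTranspose_same (A χ')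

theorem covOp_mono (hp : ∀ i j, 0 ≤ p i j) : Monotone (covOp p A) := fun R R' h => by
  rw [← sub_nonneg, ← map_sub]
  exact covOp_nonneg hp (sub_nonneg.2 h)

theorem covOp_pow_mono (hp : ∀ i j, 0 ≤ p i j) (k : ℕ) : Monotone (covOp p A ^ k) := by
  rw [Module.End.coe_pow]
  exact (covOp_mono hp).iterate k

theorem covOp_pow_nonneg (hp : ∀ i j, 0 ≤ p i j) (k : ℕ) {R : ι → Matrix n n ℝ} (hR : 0 ≤ R) :
    0 ≤ (covOp p A ^ k) R := by
  simpa only [map_zero] using covOp_pow_mono (A := A) hp k hR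

theorem covOp_pow_le_pow_smul (hp : ∀ i j, 0 ≤ p i j) {R : ι → Matrix n n ℝ} {lam : ℝ}
    (hlam : 0 ≤ lam) (hR : covOp p A R ≤ lam • R) (k : ℕ) :
    (covOp p A ^ k) R ≤ lam ^ k • R := by
  induction k with
  | zero => simp only [pow_zero, Module.End.one_apply, one_smul, le_refl]
  | succ k ih =>
    calc (covOp p A ^ (k + 1)) R
        = covOp p A ((covOp p A ^ k) R) := by rw [pow_succ', Module.End.mul_apply]
      _ ≤ covOp p A (lam ^ k • R) := covOp_mono hp ih
      _ = lam ^ k • covOp p A R := map_smul _ _ _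
      _ ≤ lam ^ k • lam • R := smul_le_smul_of_nonneg_left hR (pow_nonneg hlam k)
      _ = lam ^ (k + 1) • R := by rw [smul_smul, pow_succ]

variable [DecidableEq ι]

/-- Exponential stability of the covariance operator, tested on the deterministic initial
conditions `θ(0) = χ`, `x(0) = x`, whose second moment is `Pi.single χ (vecMulVec x x)`. -/
def CovStable (p : ι → ι → ℝ) (A : ι → Matrix n n ℝ) : Prop :=
  ∃ c : ℝ, 0 < c ∧ ∃ lam : ℝ, 0 ≤ lam ∧ lam < 1 ∧ ∀ (χ : ι) (x : n → ℝ) (k : ℕ),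
    totalTrace ((covOp p A ^ k) (Pi.single χ (vecMulVec x x))) ≤ c * lam ^ k * (x ⬝ᵥ x)

theorem covStable_of_lyapunov (hp : ∀ i j, 0 ≤ p i j) {Q : ι → Matrix n n ℝ}
    (hQ : ∀ χ, (Q χ).PosDef) (hlyap : ∀ χ, (Q χ - covOp p A Q χ).PosDef) : CovStable p A := by
  classical
  have hQ0 : 0 ≤ Q := fun χ => nonneg_iff_posSemidef.2 (hQ χ).posSemidef
  obtain ⟨ε, hε, hε1, hεQ⟩ := exists_pos_smul_le hlyap hQ0
  have contraction : covOp p A Q ≤ (1 - ε) • Q := by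
    rw [sub_smul, one_smul]
    exact le_sub_comm.1 hεQ
  obtain ⟨r, hr, hrQ⟩ := exists_pos_smul_one_le hQ
  have htr := totalTrace_nonneg hQ0
  refine ⟨totalTrace Q / r + 1, by positivity, 1 - ε, by linarith, by linarith, fun χ x k => ?_⟩
  have hxx : 0 ≤ x ⬝ᵥ x := by
    simpa only [star_trivial] using dotProduct_star_self_nonneg x
  have start : (Pi.single χ (vecMulVec x x) : ι → Matrix n n ℝ) ≤ ((x ⬝ᵥ x) / r) • Q := by
    calc (Pi.single χ (vecMulVec x x) : ι → Matrix n n ℝ)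
        ≤ (x ⬝ᵥ x) • 1 := single_vecMulVec_le χ x
      _ = ((x ⬝ᵥ x) / r) • r • (1 : ι → Matrix n n ℝ) := by rw [smul_smul, div_mul_cancel₀ _ hr.ne']
      _ ≤ ((x ⬝ᵥ x) / r) • Q := smul_le_smul_of_nonneg_left hrQ (by positivity)
  calc totalTrace ((covOp p A ^ k) (Pi.single χ (vecMulVec x x)))
      ≤ totalTrace (((x ⬝ᵥ x) / r) • (1 - ε) ^ k • Q) := by
        refine totalTrace_mono ((covOp_pow_mono hp k start).trans ?_)
        rw [map_smul]
        exact smul_le_smul_of_nonneg_left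
          (covOp_pow_le_pow_smul hp (sub_nonneg.2 hε1) contraction k) (by positivity)
    _ = totalTrace Q / r * (1 - ε) ^ k * (x ⬝ᵥ x) := by
        simp only [map_smul, smul_eq_mul]; ring
    _ ≤ (totalTrace Q / r + 1) * (1 - ε) ^ k * (x ⬝ᵥ x) := by
        have := pow_nonneg (sub_nonneg.2 hε1) k
        gcongr
        linarith

theorem CovStable.tendsto_totalTrace_pow_one [DecidableEq n] (hp : ∀ i j, 0 ≤ p i j)
    (h : CovStable p A) :
    Filter.Tendsto (fun k => totalTrace ((covOp p A ^ k) 1)) Filter.atTop (nhds 0) := by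
  obtain ⟨c, -, lam, hlam0, hlam1, hdecay⟩ := h
  have hgeom : Filter.Tendsto (fun k => ∑ _χ : ι, ∑ _a : n, c * lam ^ k) Filter.atTop (nhds 0) := by
    simpa only [mul_zero, Finset.sum_const_zero] using
      tendsto_finsetSum Finset.univ fun _ _ => tendsto_finsetSum Finset.univ fun _ _ =>
        (tendsto_pow_atTop_nhds_zero_of_lt_one hlam0 hlam1).const_mul c
  refine squeeze_zero (fun k => totalTrace_nonneg (covOp_pow_nonneg hp k zero_le_one))
    (fun k => ?_) hgeom
  simp only [one_eq_sum_single_vecMulVec, map_sum]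
  refine Finset.sum_le_sum fun χ _ => Finset.sum_le_sum fun a _ => ?_
  simpa only [dotProduct_single, Pi.single_eq_same, mul_one] using hdecay χ (Pi.single a 1) k

-- A truncated Neumann series suffices: for `Q = ∑_{l < k} Lˡ 1` one has `Q - L Q = 1 - Lᵏ 1`.
theorem CovStable.exists_lyapunov (hp : ∀ i j, 0 ≤ p i j) (h : CovStable p A) :
    ∃ Q : ι → Matrix n n ℝ, (∀ χ, (Q χ).PosDef) ∧ ∀ χ, (Q χ - covOp p A Q χ).PosDef := by
  classical
  obtain ⟨k, htr, hk⟩ := (((h.tendsto_totalTrace_pow_one hp).eventually_lt_const one_pos).and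
    (Filter.eventually_gt_atTop 0)).exists
  have hpow : ∀ l, 0 ≤ (covOp p A ^ l) 1 := fun l => covOp_pow_nonneg hp l zero_le_one
  refine ⟨∑ l ∈ Finset.range k, (covOp p A ^ l) 1, fun χ => ?_, fun χ => ?_⟩
  · refine posDef_iff_exists_smul_one_le.2 ⟨1, one_pos, ?_⟩
    rw [one_smul]
    exact Finset.single_le_sum (fun l _ => hpow l) (Finset.mem_range.2 hk) χ
  · have telescope : ∑ l ∈ Finset.range k, (covOp p A ^ l) 1
        - covOp p A (∑ l ∈ Finset.range k, (covOp p A ^ l) 1) = 1 - (covOp p A ^ k) 1 := by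
      simpa only [Module.End.mul_apply, LinearMap.sub_apply, Module.End.one_apply,
        LinearMap.sum_apply] using LinearMap.congr_fun (mul_neg_geom_sum (covOp p A) k) 1
    rw [← Pi.sub_apply, telescope]
    exact posDef_one_sub (hpow k) htr χ

theorem covStable_iff_lyapunov (hp : ∀ i j, 0 ≤ p i j) :
    CovStable p A ↔ ∃ Q : ι → Matrix n n ℝ,
      (∀ χ, (Q χ).PosDef) ∧ ∀ χ, (Q χ - covOp p A Q χ).PosDef :=
  ⟨CovStable.exists_lyapunov hp, fun ⟨_, hQ, hlyap⟩ => covStable_of_lyapunov hp hQ hlyap⟩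

end CovarianceOperator

section MarkovChain

variable {Ω S V : Type} {mΩ : MeasurableSpace Ω} {μ : Measure Ω} {X : ℕ → Ω → S} {p : S → S → ℝ}

theorem IsMarkovChain.of_comp_injective {φ : S → V} (hφ : Function.Injective φ) {q : V → V → ℝ}
    (h : IsMarkovChain μ (fun k ω => φ (X k ω)) q) :
    IsMarkovChain μ X fun i j => q (φ i) (φ j) := fun k j i => by
  simpa only [hφ.eq_iff] using h k (φ j) fun l => φ (i l)

theorem measurableSet_cylinder [MeasurableSpace S] [MeasurableSingletonClass S] (k : ℕ)
    (i : ℕ → S) : MeasurableSet {x : ℕ → S | ∀ l ≤ k, x l = i l} := by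
  simp only [Set.ofPred_forall]
  exact .iInter fun l => .iInter fun _ => measurable_pi_apply l (measurableSet_singleton _)

theorem measurableSet_cylinder_succ [MeasurableSpace S] [MeasurableSingletonClass S] (k : ℕ)
    (j : S) (i : ℕ → S) : MeasurableSet {x : ℕ → S | x (k + 1) = j ∧ ∀ l ≤ k, x l = i l} :=
  ((measurableSet_singleton j).preimage (measurable_pi_apply (k + 1))).inter
    (measurableSet_cylinder k i)

theorem isMarkovChain_map_iff [MeasurableSpace S] [MeasurableSingletonClass S]
    (hX : Measurable fun ω l => X l ω) :
    IsMarkovChain (μ.map fun ω l => X l ω) (fun k x => x k) p ↔ IsMarkovChain μ X p := by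
  refine forall_congr' fun k => forall_congr' fun j => forall_congr' fun i => ?_
  rw [Measure.map_apply hX (measurableSet_cylinder k i),
    Measure.map_apply hX (measurableSet_cylinder_succ k j i)]
  rfl

theorem IsMarkovChain.prodMk [MeasurableSpace S] [MeasurableSingletonClass S] [MeasurableSpace V]
    [MeasurableSingletonClass V] {Y : ℕ → Ω → V} {q : V → V → ℝ} (hX : IsMarkovChain μ X p)
    (hY : IsMarkovChain μ Y q) (hind : IndepFun (fun ω l => X l ω) (fun ω l => Y l ω) μ) :
    IsMarkovChain μ (fun k ω => (X k ω, Y k ω)) fun a b => p a.1 b.1 * q a.2 b.2 := by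
  intro k j i
  have factor {B : Set (ℕ → S)} {C : Set (ℕ → V)} (hB : MeasurableSet B) (hC : MeasurableSet C) :
      (μ {ω | (fun l => X l ω) ∈ B ∧ (fun l => Y l ω) ∈ C}).toReal
        = (μ {ω | (fun l => X l ω) ∈ B}).toReal * (μ {ω | (fun l => Y l ω) ∈ C}).toReal := by
    rw [← ENNReal.toReal_mul]
    exact congrArg ENNReal.toReal (hind.measure_inter_preimage_eq_mul B C hB hC)
  have past := factor (measurableSet_cylinder k fun l => (i l).1)
    (measurableSet_cylinder k fun l => (i l).2)
  have next := factor (measurableSet_cylinder_succ k j.1 fun l => (i l).1)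
    (measurableSet_cylinder_succ k j.2 fun l => (i l).2)
  calc (μ {ω | (X (k + 1) ω, Y (k + 1) ω) = j ∧ ∀ l ≤ k, (X l ω, Y l ω) = i l}).toReal
      = (μ {ω | X (k + 1) ω = j.1 ∧ ∀ l ≤ k, X l ω = (i l).1}).toReal
          * (μ {ω | Y (k + 1) ω = j.2 ∧ ∀ l ≤ k, Y l ω = (i l).2}).toReal := by
        refine Eq.trans (congrArg (fun B => (μ B).toReal) (Set.ext fun ω => ?_)) next
        simp only [Prod.ext_iff, forall_and, Set.mem_ofPred_eq]
        exact and_and_and_comm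
    _ = p (i k).1 j.1 * q (i k).2 j.2
          * ((μ {ω | ∀ l ≤ k, X l ω = (i l).1}).toReal
            * (μ {ω | ∀ l ≤ k, Y l ω = (i l).2}).toReal) := by
        rw [hX k j.1 fun l => (i l).1, hY k j.2 fun l => (i l).2]; ring
    _ = p (i k).1 j.1 * q (i k).2 j.2
          * (μ {ω | ∀ l ≤ k, (X l ω, Y l ω) = i l}).toReal := by
        simp only [Prod.ext_iff, forall_and]
        exact congrArg _ past.symm

theorem prodMk_path_eq_iff {Z : ℕ → Ω → V} {z₀ : S → V} {g : V → S → V}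
    (h0 : ∀ ω, Z 0 ω = z₀ (X 0 ω)) (hsucc : ∀ k ω, Z (k + 1) ω = g (Z k ω) (X (k + 1) ω))
    (k : ℕ) (i : ℕ → S × V) (ω : Ω) :
    (∀ l ≤ k, (X l ω, Z l ω) = i l) ↔
      ((i 0).2 = z₀ (i 0).1 ∧ ∀ l < k, (i (l + 1)).2 = g (i l).2 (i (l + 1)).1) ∧
        ∀ l ≤ k, X l ω = (i l).1 := by
  simp only [Prod.ext_iff]
  constructor
  · intro h
    refine ⟨⟨?_, fun l hl => ?_⟩, fun l hl => (h l hl).1⟩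
    · rw [← (h 0 k.zero_le).2, ← (h 0 k.zero_le).1, h0]
    · rw [← (h (l + 1) hl).2, ← (h (l + 1) hl).1, ← (h l hl.le).2, hsucc]
  · rintro ⟨⟨hz0, hzs⟩, hX⟩ l hl
    refine ⟨hX l hl, ?_⟩
    induction l with
    | zero => rw [h0, hX 0 hl, hz0]
    | succ l ih => rw [hsucc, ih (by lia), hX (l + 1) hl, hzs l hl]

theorem IsMarkovChain.prodMk_rec [DecidableEq V] (hX : IsMarkovChain μ X p) {Z : ℕ → Ω → V}
    {z₀ : S → V} {g : V → S → V} (h0 : ∀ ω, Z 0 ω = z₀ (X 0 ω))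
    (hsucc : ∀ k ω, Z (k + 1) ω = g (Z k ω) (X (k + 1) ω)) :
    IsMarkovChain μ (fun k ω => (X k ω, Z k ω))
      fun a b => if b.2 = g a.2 b.1 then p a.1 b.1 else 0 := by
  intro k j i
  have next (ω : Ω) : ((X (k + 1) ω, Z (k + 1) ω) = j ∧ ∀ l ≤ k, (X l ω, Z l ω) = i l) ↔
      j.2 = g (i k).2 j.1 ∧ X (k + 1) ω = j.1 ∧ ∀ l ≤ k, (X l ω, Z l ω) = i l := by
    rw [Prod.ext_iff, hsucc]
    constructor
    · rintro ⟨⟨hx, hz⟩, h⟩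
      exact ⟨by rw [← hz, ← hx, ← h k le_rfl], hx, h⟩
    · rintro ⟨hz, hx, h⟩
      exact ⟨⟨hx, by rw [hz, ← h k le_rfl, hx]⟩, h⟩
  simp only [next]
  simp only [prodMk_path_eq_iff h0 hsucc]
  by_cases hz : j.2 = g (i k).2 j.1
  · by_cases hi : (i 0).2 = z₀ (i 0).1 ∧ ∀ l < k, (i (l + 1)).2 = g (i l).2 (i (l + 1)).1
    · simpa only [hz, eq_true hi, if_true, true_and] using hX k j.1 fun l => (i l).1
    · simp only [hi, false_and, and_false, Set.ofPred_false, measure_empty, ENNReal.toReal_zero,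
        mul_zero]
  · simp only [hz, false_and, if_false, Set.ofPred_false, measure_empty, ENNReal.toReal_zero,
      zero_mul]

end MarkovChain

section Existence

variable {S : Type} [MeasurableSpace S]

/-- The law on trajectories of the homogeneous Markov chain started at `i₀` with transition
kernel `κ`, given by the Ionescu-Tulcea theorem. -/
def markovLaw (i₀ : S) (κ : Kernel S S) [IsMarkovKernel κ] : Measure (ℕ → S) :=
  Kernel.trajMeasure (X := fun _ => S) (Measure.dirac i₀) fun k =>
    κ.comap (fun x : Finset.Iic k → S => x ⟨k, Finset.mem_Iic.2 le_rfl⟩) (measurable_pi_apply _)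

instance (i₀ : S) (κ : Kernel S S) [IsMarkovKernel κ] : IsProbabilityMeasure (markovLaw i₀ κ) := by
  unfold markovLaw
  infer_instance

variable [MeasurableSingletonClass S]

theorem markovLaw_ae_zero (i₀ : S) (κ : Kernel S S) [IsMarkovKernel κ] :
    ∀ᵐ x ∂markovLaw i₀ κ, x 0 = i₀ := by
  have start : (markovLaw i₀ κ).map (Preorder.frestrictLe (π := fun _ => S) 0)
      = Measure.dirac fun _ => i₀ := by
    rw [markovLaw, Kernel.trajMeasure.eq_def, Measure.map_comp _ _ (by fun_prop),
      Kernel.traj_map_frestrictLe, Kernel.partialTraj_self, Measure.id_comp]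
    exact Measure.map_dirac' (MeasurableEquiv.measurable _) _
  have : ∀ᵐ y ∂(markovLaw i₀ κ).map (Preorder.frestrictLe (π := fun _ => S) 0),
      y ⟨0, Finset.mem_Iic.2 le_rfl⟩ = i₀ := by
    rw [start]
    exact (ae_dirac_iff ((measurableSet_singleton i₀).preimage (measurable_pi_apply _))).2 rfl
  exact ae_of_ae_map (by fun_prop) this

theorem isMarkovChain_markovLaw (i₀ : S) (κ : Kernel S S) [IsMarkovKernel κ] :
    IsMarkovChain (markovLaw i₀ κ) (fun k x => x k) fun i j => (κ i {j}).toReal := by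
  intro k j i
  let past : Set (Finset.Iic k → S) := {fun l : Finset.Iic k => i l}
  have hpast : MeasurableSet past := measurableSet_singleton _
  have past_eq : {x : ℕ → S | ∀ l ≤ k, x l = i l}
      = Preorder.frestrictLe (π := fun _ => S) k ⁻¹' past := by
    ext x
    simp [past, funext_iff]
  have next_eq : {x : ℕ → S | x (k + 1) = j ∧ ∀ l ≤ k, x l = i l}
      = (fun x => (Preorder.frestrictLe (π := fun _ => S) k x, x (k + 1))) ⁻¹' (past ×ˢ {j}) := by
    ext x
    simp [past, funext_iff, and_comm]
  have disintegration := congrArg (fun ν => ν (past ×ˢ {j}))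
    (Kernel.map_frestrictLe_trajMeasure_compProd_eq_map_trajMeasure
      (X := fun _ => S) (μ₀ := Measure.dirac i₀) (a := k)
      (κ := fun k => κ.comap (fun x : Finset.Iic k → S => x ⟨k, Finset.mem_Iic.2 le_rfl⟩)
        (measurable_pi_apply _)))
  rw [Measure.compProd_apply_prod hpast (measurableSet_singleton _), lintegral_singleton,
    Measure.map_apply (by fun_prop) hpast, Measure.map_apply (by fun_prop)
      (hpast.prod (measurableSet_singleton _)), ← past_eq, ← next_eq] at disintegration
  rw [← ENNReal.toReal_mul]
  exact congrArg ENNReal.toReal disintegration.symm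

theorem exists_transitionKernel [Fintype S] {p : S → S → ℝ} (hp0 : ∀ i j, 0 ≤ p i j)
    (hp1 : ∀ i, ∑ j, p i j = 1) :
    ∃ κ : Kernel S S, IsMarkovKernel κ ∧ ∀ i j, (κ i {j}).toReal = p i j := by
  have row_sum (i : S) : ∑ j, ENNReal.ofReal (p i j) = 1 := by
    rw [← ENNReal.ofReal_sum_of_nonneg fun j _ => hp0 i j, hp1, ENNReal.ofReal_one]
  refine ⟨⟨fun i => (PMF.ofFintype _ (row_sum i)).toMeasure, measurable_of_countable _⟩,
    ⟨fun i => PMF.toMeasure.isProbabilityMeasure _⟩, fun i j => ?_⟩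
  rw [Kernel.coe_mk, PMF.toMeasure_apply_singleton _ j (measurableSet_singleton j),
    PMF.ofFintype_apply, ENNReal.toReal_ofReal (hp0 i j)]

end Existence

theorem exists_mjlsReal {NN MM : ℕ} {P : Matrix (Fin NN) (Fin NN) ℝ}
    {Q : Matrix (Fin MM) (Fin MM) ℝ} (hP0 : ∀ i j, 0 ≤ P i j) (hP1 : ∀ i, ∑ j, P i j = 1)
    (hQ0 : ∀ i j, 0 ≤ Q i j) (hQ1 : ∀ i, ∑ j, Q i j = 1) (r₀ : Fin NN) (s₀ : Fin MM) :
    ∃ S : MJLSReal NN MM P Q, ∀ᵐ ω ∂S.μ, S.r 0 ω = r₀ ∧ S.s 0 ω = s₀ := by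
  obtain ⟨κ, _, hκ⟩ := exists_transitionKernel hP0 hP1
  obtain ⟨η, _, hη⟩ := exists_transitionKernel hQ0 hQ1
  let μ := (markovLaw r₀ κ).prod (markovLaw s₀ η)
  have map_fst : μ.map Prod.fst = markovLaw r₀ κ := measurePreserving_fst.map_eq
  have map_snd : μ.map Prod.snd = markovLaw s₀ η := measurePreserving_snd.map_eq
  refine ⟨⟨_, inferInstance, μ, inferInstance, fun k x => x.1 k, fun k x => x.2 k,
    fun k => by fun_prop, fun k => by fun_prop, (isMarkovChain_map_iff measurable_fst).1 ?_,
    (isMarkovChain_map_iff measurable_snd).1 ?_,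
    indepFun_prod (X := id) (Y := id) measurable_id measurable_id⟩, ?_⟩
  · simpa only [map_fst, hκ] using isMarkovChain_markovLaw r₀ κ
  · simpa only [map_snd, hη] using isMarkovChain_markovLaw s₀ η
  · exact (measurePreserving_fst.quasiMeasurePreserving.ae (markovLaw_ae_zero r₀ κ)).and
      (measurePreserving_snd.quasiMeasurePreserving.ae (markovLaw_ae_zero s₀ η))

section StateAlong

variable {S n : Type*} [Fintype n]

/-- The state at time `k` of `x(k+1) = A (θ k) x(k)`, `x(0) = x0`, as a function of the mode
path `θ`. -/
def stateAlong (A : S → Matrix n n ℝ) (x0 : n → ℝ) : ℕ → (ℕ → S) → n → ℝ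
  | 0, _ => x0
  | k + 1, θ => A (θ k) *ᵥ stateAlong A x0 k θ

theorem stateAlong_congr {A : S → Matrix n n ℝ} {x0 : n → ℝ} {k : ℕ} {θ θ' : ℕ → S}
    (h : ∀ l < k, θ l = θ' l) : stateAlong A x0 k θ = stateAlong A x0 k θ' := by
  induction k with
  | zero => rfl
  | succ k ih =>
    rw [stateAlong, stateAlong, h k k.lt_succ_self, ih fun l hl => h l (hl.trans k.lt_succ_self)]

theorem stateAlong_comp {V : Type*} (A : V → Matrix n n ℝ) (φ : S → V) (x0 : n → ℝ) (k : ℕ)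
    (θ : ℕ → S) :
    stateAlong A x0 k (fun l => φ (θ l)) = stateAlong (fun i => A (φ i)) x0 k θ := by
  induction k with
  | zero => rfl
  | succ k ih => rw [stateAlong, stateAlong, ih]

theorem traj_zero_noise {Ω S : Type} {d q : ℕ} (A : S → Matrix (Fin d) (Fin d) ℝ)
    (E : S → Matrix (Fin d) (Fin q) ℝ) (X : ℕ → Ω → S) (x0 : Fin d → ℝ) (k : ℕ) (ω : Ω) :
    traj A E X (fun _ _ => 0) x0 k ω = stateAlong A x0 k fun l => X l ω := by
  induction k with
  | zero => rfl
  | succ k ih => rw [traj, stateAlong, ih, mulVec_zero, add_zero]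

end StateAlong

section SecondMoments

variable {Ω S n : Type} {mΩ : MeasurableSpace Ω} {μ : Measure Ω}

theorem setIntegral_comp_eq_sum [IsFiniteMeasure μ] {H : Type*} [Fintype H] [MeasurableSpace H]
    [MeasurableSingletonClass H] {Y : Ω → H} (hY : Measurable Y) (g : H → ℝ) (B : Set Ω) :
    ∫ ω in B, g (Y ω) ∂μ = ∑ h, μ.real (Y ⁻¹' {h} ∩ B) * g h := by
  rw [← integral_map hY.aemeasurable (Measurable.of_discrete (f := g)).aestronglyMeasurable,
    integral_fintype .of_finite]
  refine Finset.sum_congr rfl fun h _ => ?_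
  rw [map_measureReal_apply hY (measurableSet_singleton h),
    measureReal_restrict_apply (hY (measurableSet_singleton h)), smul_eq_mul]

variable [Fintype n] {X : ℕ → Ω → S}

/-- The second moment matrices `𝔼[x(k) x(k)ᵀ; X k = χ]` of `x(k+1) = A (X k) x(k)`, split
according to the current mode `χ`. -/
def secondMoment (μ : Measure Ω) (X : ℕ → Ω → S) (A : S → Matrix n n ℝ) (x0 : n → ℝ) (k : ℕ)
    (χ : S) : Matrix n n ℝ :=
  Matrix.of fun a b => ∫ ω in X k ⁻¹' {χ},
    stateAlong A x0 k (fun l => X l ω) a * stateAlong A x0 k (fun l => X l ω) b ∂μ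

theorem secondMoment_zero [IsProbabilityMeasure μ] [DecidableEq S] {χ : S}
    (h0 : ∀ᵐ ω ∂μ, X 0 ω = χ) (A : S → Matrix n n ℝ) (x0 : n → ℝ) :
    secondMoment μ X A x0 0 = Pi.single χ (vecMulVec x0 x0) := by
  ext χ' a b
  have start : μ.real (X 0 ⁻¹' {χ'}) = if χ' = χ then 1 else 0 := by
    have hae : X 0 ⁻¹' {χ'} =ᵐ[μ] {_ω | χ' = χ} := Filter.eventuallyEq_set.2 <| by
      filter_upwards [h0] with ω hω
      simp only [Set.mem_preimage, hω, Set.mem_singleton_iff, eq_comm]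
    rw [measureReal_congr hae]
    split_ifs with hχ <;> simp [hχ]
  simp only [secondMoment, stateAlong, Matrix.of_apply, setIntegral_const, start]
  by_cases hχ : χ' = χ
  · subst hχ
    simp [vecMulVec_apply]
  · simp [hχ]

variable [MeasurableSpace S] [MeasurableSingletonClass S]

theorem integrable_of_dependsOn [Finite S] [IsFiniteMeasure μ]
    (hX : ∀ k, Measurable (X k)) {F : (ℕ → S) → ℝ} {k : ℕ} (hF : DependsOn F (Set.Iic k)) :
    Integrable (fun ω => F fun l => X l ω) μ := by
  obtain ⟨g, rfl⟩ := dependsOn_iff_exists_comp.1 hF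
  exact Integrable.of_finite.comp_measurable (g := g)
    (measurable_pi_lambda (fun ω (l : Set.Iic k) => X l ω) fun l => hX l)

theorem integrable_stateAlong_mul [Finite S] [IsFiniteMeasure μ]
    (hX : ∀ k, Measurable (X k)) (A : S → Matrix n n ℝ) (x0 : n → ℝ) (k : ℕ) (a b : n) :
    Integrable (fun ω => stateAlong A x0 k (fun l => X l ω) a
      * stateAlong A x0 k (fun l => X l ω) b) μ :=
  integrable_of_dependsOn (k := k) hX
    (F := fun θ => stateAlong A x0 k θ a * stateAlong A x0 k θ b)
    fun θ θ' h => by simp only [stateAlong_congr fun l (hl : l < k) => h l hl.le]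

variable [Fintype S] {p : S → S → ℝ}

theorem IsMarkovChain.setIntegral_succ [IsFiniteMeasure μ] (h : IsMarkovChain μ X p)
    (hX : ∀ k, Measurable (X k)) {F : (ℕ → S) → ℝ} {k : ℕ} (hF : DependsOn F (Set.Iic k)) (j : S) :
    ∫ ω in X (k + 1) ⁻¹' {j}, F (fun l => X l ω) ∂μ
      = ∑ i, p i j * ∫ ω in X k ⁻¹' {i}, F (fun l => X l ω) ∂μ := by
  classical
  obtain ⟨g, rfl⟩ := dependsOn_iff_exists_comp.1 hF
  let Y : Ω → (Set.Iic k → S) := fun ω l => X l ω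
  have hY : Measurable Y := measurable_pi_lambda _ fun l => hX l
  let last (y : Set.Iic k → S) : S := y ⟨k, Set.self_mem_Iic⟩
  have next (y : Set.Iic k → S) :
      μ.real (Y ⁻¹' {y} ∩ X (k + 1) ⁻¹' {j}) = p (last y) j * μ.real (Y ⁻¹' {y}) := by
    have hy (ω : Ω) : (∀ l ≤ k, X l ω = y ⟨min l k, min_le_right l k⟩) ↔ Y ω = y := by
      simp +contextual [Y, funext_iff]
    have hk := h k j fun l => y ⟨min l k, min_le_right l k⟩
    simp only [min_self, hy] at hk
    rw [Set.inter_comm]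
    exact hk
  have now (y : Set.Iic k → S) (i : S) :
      μ.real (Y ⁻¹' {y} ∩ X k ⁻¹' {i}) = if last y = i then μ.real (Y ⁻¹' {y}) else 0 := by
    split_ifs with hi
    · exact congrArg _ (Set.inter_eq_left.2 fun ω hω => (congrArg last hω).trans hi)
    · refine (congrArg _ (Set.eq_empty_of_forall_notMem fun ω hω => hi ?_)).trans measureReal_empty
      exact (congrArg last hω.1).symm.trans hω.2
  calc ∫ ω in X (k + 1) ⁻¹' {j}, g (Y ω) ∂μ
      = ∑ y, p (last y) j * μ.real (Y ⁻¹' {y}) * g y := by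
        simp only [setIntegral_comp_eq_sum hY, next]
    _ = ∑ i, p i j * ∑ y, (if last y = i then μ.real (Y ⁻¹' {y}) else 0) * g y := by
        simp only [Finset.mul_sum, ite_mul, zero_mul, mul_ite, mul_zero]
        rw [Finset.sum_comm]
        simp only [Finset.sum_ite_eq, Finset.mem_univ, if_true, mul_assoc]
    _ = ∑ i, p i j * ∫ ω in X k ⁻¹' {i}, g (Y ω) ∂μ := by
        simp only [setIntegral_comp_eq_sum hY, now]

theorem secondMoment_succ [IsFiniteMeasure μ] (h : IsMarkovChain μ X p)
    (hX : ∀ k, Measurable (X k)) (A : S → Matrix n n ℝ) (x0 : n → ℝ) (k : ℕ) :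
    secondMoment μ X A x0 (k + 1) = covOp p A (secondMoment μ X A x0 k) := by
  ext χ a b
  have propagate (i : S) : ∫ ω in X k ⁻¹' {i}, stateAlong A x0 (k + 1) (fun l => X l ω) a
        * stateAlong A x0 (k + 1) (fun l => X l ω) b ∂μ
      = (A i * secondMoment μ X A x0 k i * (A i)ᵀ) a b :=
    calc _ = ∫ ω in X k ⁻¹' {i}, ∑ d, (∑ c, A i a c * (stateAlong A x0 k (fun l => X l ω) c
              * stateAlong A x0 k (fun l => X l ω) d)) * A i b d ∂μ := by
          refine setIntegral_congr_fun (hX k (measurableSet_singleton i)) fun ω hω => ?_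
          have hω : X k ω = i := hω
          simp only [stateAlong, hω, mulVec, dotProduct, Finset.sum_mul_sum]
          rw [Finset.sum_comm]
          simp only [Finset.sum_mul]
          exact Finset.sum_congr rfl fun d _ => Finset.sum_congr rfl fun c _ => by ring
      _ = (A i * secondMoment μ X A x0 k i * (A i)ᵀ) a b := by
          have hint c d := (integrable_stateAlong_mul (μ := μ) hX A x0 k c d).integrableOn
            (s := X k ⁻¹' {i})
          rw [integral_finsetSum _ fun d _ => (integrable_finsetSum _ fun c _ =>
            (hint c d).const_mul _).mul_const _, mul_apply]
          refine Finset.sum_congr rfl fun d _ => ?_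
          rw [integral_mul_const, integral_finsetSum _ fun c _ => (hint c d).const_mul _, mul_apply]
          simp only [integral_const_mul, secondMoment, Matrix.of_apply, transpose_apply]
  have step := h.setIntegral_succ hX (k := k) (j := χ)
    (F := fun θ => stateAlong A x0 (k + 1) θ a * stateAlong A x0 (k + 1) θ b)
    fun θ θ' hθ => by
      simp only [stateAlong_congr fun l (hl : l < k + 1) => hθ l (Nat.lt_succ_iff.1 hl)]
  simp only [propagate] at step
  rw [covOp_apply, secondMoment, Matrix.of_apply, step, Matrix.sum_apply]
  rfl

theorem secondMoment_eq_covOp_pow [IsProbabilityMeasure μ] [DecidableEq S]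
    (h : IsMarkovChain μ X p) (hX : ∀ k, Measurable (X k)) {χ : S} (h0 : ∀ᵐ ω ∂μ, X 0 ω = χ)
    (A : S → Matrix n n ℝ) (x0 : n → ℝ) (k : ℕ) :
    secondMoment μ X A x0 k = (covOp p A ^ k) (Pi.single χ (vecMulVec x0 x0)) := by
  induction k with
  | zero => exact secondMoment_zero h0 A x0
  | succ k ih => rw [secondMoment_succ h hX, ih, pow_succ', Module.End.mul_apply]

theorem lintegral_stateAlong [IsFiniteMeasure μ] (hX : ∀ k, Measurable (X k))
    (A : S → Matrix n n ℝ) (x0 : n → ℝ) (k : ℕ) :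
    ∫⁻ ω, ENNReal.ofReal (∑ a, stateAlong A x0 k (fun l => X l ω) a ^ 2) ∂μ
      = ENNReal.ofReal (totalTrace (secondMoment μ X A x0 k)) := by
  have hint a : Integrable (fun ω => stateAlong A x0 k (fun l => X l ω) a ^ 2) μ := by
    simpa only [sq] using integrable_stateAlong_mul hX A x0 k a a
  have modes : ⋃ χ, X k ⁻¹' {χ} = Set.univ := by
    rw [← Set.preimage_iUnion, Set.iUnion_of_singleton, Set.preimage_univ]
  have split_modes (a : n) : ∫ ω, stateAlong A x0 k (fun l => X l ω) a ^ 2 ∂μ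
      = ∑ χ, secondMoment μ X A x0 k χ a a := by
    rw [← setIntegral_univ, ← modes, integral_iUnion_fintype
      (fun χ => hX k (measurableSet_singleton χ)) (pairwise_disjoint_fiber (X k))
      fun χ => (hint a).integrableOn]
    simp only [secondMoment, sq, Matrix.of_apply]
  rw [← ofReal_integral_eq_lintegral_ofReal (integrable_finsetSum _ fun a _ => hint a)
      (Filter.Eventually.of_forall fun ω => Finset.sum_nonneg fun a _ => sq_nonneg _),
    integral_finsetSum _ fun a _ => hint a, totalTrace_apply]
  simp only [split_modes, trace, diag_apply]
  rw [Finset.sum_comm]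

end SecondMoments

section ExtendedProcess

theorem intToFin_zero (T : ℕ) [NeZero T] : intToFin T 0 = 0 := by
  ext
  simp [intToFin]

theorem intToFin_add_one (T : ℕ) [NeZero T] (a : ℤ) : intToFin T (a + 1) = intToFin T a + 1 := by
  have hT : (T : ℤ) ≠ 0 := mod_cast NeZero.ne T
  ext
  simp only [intToFin, Fin.val_add, Fin.val_one']
  zify
  rw [Int.toNat_of_nonneg (Int.emod_nonneg _ hT), Int.toNat_of_nonneg (Int.emod_nonneg _ hT)]
  simp [Int.add_emod]

theorem intToFin_val {T : ℕ} [NeZero T] (δ : Fin T) : intToFin T δ.val = δ := by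
  ext
  simp only [intToFin]
  norm_cast
  exact Nat.mod_eq_of_lt δ.isLt

variable {Ω : Type} {NN MM T : ℕ} [NeZero T] (r : ℕ → Ω → Fin NN) (s : ℕ → Ω → Fin MM)
  (f : Fin MM → Bool) (τ₀ : ℤ) (σ₀ : Fin NN)

/-- One-step update of the memory `(σ, ρ)` of the extended process, given the new value of
`(r, s)`. -/
def memoryUpdate (c : Fin NN × Fin T) (a : Fin NN × Fin MM) : Fin NN × Fin T :=
  if f a.2 = true then (a.1, 0) else (c.1, c.2 + 1)

/-- The initial memory `(σ(0), ρ(0))` of the extended process, given `(r(0), s(0))`. -/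
def memoryInit (a : Fin NN × Fin MM) : Fin NN × Fin T :=
  if f a.2 = true then (a.1, 0) else (σ₀, intToFin T (-τ₀))

theorem pbar_eq_ite (P : Matrix (Fin NN) (Fin NN) ℝ) (Q : Matrix (Fin MM) (Fin MM) ℝ)
    (χ χ' : XT NN MM T) : pbar P Q f χ χ' =
      if χ'.2.2 = memoryUpdate f χ.2.2 (χ'.1, χ'.2.1) then P χ.1 χ'.1 * Q χ.2.1 χ'.2.1 else 0 := by
  by_cases h : f χ'.2.1 = true <;>
    simp [pbar, memoryUpdate, h, Prod.ext_iff, eq_comm]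

theorem pbar_nonneg {P : Matrix (Fin NN) (Fin NN) ℝ} {Q : Matrix (Fin MM) (Fin MM) ℝ}
    (hP : ∀ i j, 0 ≤ P i j) (hQ : ∀ i j, 0 ≤ Q i j) (χ χ' : XT NN MM T) :
    0 ≤ pbar P Q f χ χ' := by
  rw [pbar_eq_ite]
  split_ifs
  · exact mul_nonneg (hP _ _) (hQ _ _)
  · exact le_rfl

theorem rbarProc_memory_of_observed {k : ℕ} {ω : Ω} (h : f (s k ω) = true) :
    (rbarProc (T := T) r s f τ₀ σ₀ k ω).2.2 = (r k ω, 0) := by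
  have observed : ∃ j ≤ k, f (s j ω) = true := ⟨k, le_rfl, h⟩
  have latest [DecidablePred fun j => f (s j ω) = true] :
      Nat.findGreatest (fun j => f (s j ω) = true) k = k :=
    le_antisymm (Nat.findGreatest_le k) (Nat.le_findGreatest le_rfl h)
  simp [rbarProc, sigmaProc, rhoProc, tauZ, observed, latest, intToFin_zero]

theorem rbarProc_memory_zero (ω : Ω) :
    (rbarProc (T := T) r s f τ₀ σ₀ 0 ω).2.2 = memoryInit f τ₀ σ₀ (r 0 ω, s 0 ω) := by
  by_cases h : f (s 0 ω) = true
  · rw [rbarProc_memory_of_observed r s f τ₀ σ₀ h, memoryInit, if_pos h]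
  · simp [rbarProc, sigmaProc, rhoProc, tauZ, memoryInit, h]

theorem rbarProc_memory_succ (k : ℕ) (ω : Ω) :
    (rbarProc (T := T) r s f τ₀ σ₀ (k + 1) ω).2.2
      = memoryUpdate f (rbarProc r s f τ₀ σ₀ k ω).2.2 (r (k + 1) ω, s (k + 1) ω) := by
  by_cases h : f (s (k + 1) ω) = true
  · rw [rbarProc_memory_of_observed r s f τ₀ σ₀ h, memoryUpdate, if_pos h]
  · have observed : (∃ j ≤ k + 1, f (s j ω) = true) ↔ ∃ j ≤ k, f (s j ω) = true := by
      simp only [Nat.le_add_one_iff, or_and_right, exists_or, exists_eq_left, h, Bool.false_eq_true,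
        or_false]
    have latest [DecidablePred fun j => f (s j ω) = true] :
        Nat.findGreatest (fun j => f (s j ω) = true) (k + 1)
          = Nat.findGreatest (fun j => f (s j ω) = true) k := Nat.findGreatest_of_not h
    have elapsed : ((k + 1 : ℕ) : ℤ) - tauZ s f τ₀ (k + 1) ω = k - tauZ s f τ₀ k ω + 1 := by
      simp only [tauZ, observed, latest]
      push_cast
      ring
    rw [memoryUpdate, if_neg h]
    simp only [rbarProc, sigmaProc, rhoProc, observed, latest, elapsed, intToFin_add_one]

theorem inX_rbarProc (k : ℕ) (ω : Ω) : inX f (rbarProc (T := T) r s f τ₀ σ₀ k ω) := fun h => by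
  rw [rbarProc_memory_of_observed r s f τ₀ σ₀ h]
  exact ⟨rfl, rfl⟩

theorem isMarkovChain_rbarProc {mΩ : MeasurableSpace Ω} {μ : Measure Ω}
    {P : Matrix (Fin NN) (Fin NN) ℝ} {Q : Matrix (Fin MM) (Fin MM) ℝ} {r : ℕ → Ω → Fin NN}
    {s : ℕ → Ω → Fin MM} (hr : IsMarkovChain μ r fun i j => P i j)
    (hs : IsMarkovChain μ s fun i j => Q i j)
    (hind : IndepFun (fun ω l => r l ω) (fun ω l => s l ω) μ) :
    IsMarkovChain μ (rbarProc (T := T) r s f τ₀ σ₀) (pbar P Q f) := by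
  have chain := ((hr.prodMk hs hind).prodMk_rec (rbarProc_memory_zero (T := T) r s f τ₀ σ₀)
    (rbarProc_memory_succ r s f τ₀ σ₀)).of_comp_injective (X := rbarProc r s f τ₀ σ₀)
    (φ := (Equiv.prodAssoc _ _ _).symm) (Equiv.injective _)
  convert chain using 3 with χ χ'
  exact pbar_eq_ite f P Q χ χ'

theorem measurable_rbarProc {mΩ : MeasurableSpace Ω} {r : ℕ → Ω → Fin NN}
    {s : ℕ → Ω → Fin MM} (hr : ∀ k, Measurable (r k)) (hs : ∀ k, Measurable (s k)) (k : ℕ) :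
    Measurable (rbarProc (T := T) r s f τ₀ σ₀ k) := by
  suffices h : Measurable fun ω => (rbarProc (T := T) r s f τ₀ σ₀ k ω).2.2 from
    (hr k).prodMk ((hs k).prodMk h)
  induction k with
  | zero =>
    simp only [rbarProc_memory_zero]
    exact (Measurable.of_discrete (f := memoryInit f τ₀ σ₀)).comp ((hr 0).prodMk (hs 0))
  | succ k ih =>
    simp only [rbarProc_memory_succ]
    exact (Measurable.of_discrete (f := fun a : (Fin NN × Fin T) × (Fin NN × Fin MM) =>
      memoryUpdate f a.1 a.2)).comp (ih.prodMk ((hr (k + 1)).prodMk (hs (k + 1))))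

end ExtendedProcess

section ClosedLoop

variable {NN MM T n m q : ℕ} [NeZero T] {P : Matrix (Fin NN) (Fin NN) ℝ}
  {Q : Matrix (Fin MM) (Fin MM) ℝ} {f : Fin MM → Bool}

instance : DecidablePred (inX (NN := NN) (T := T) f) := fun χ =>
  inferInstanceAs (Decidable (f χ.2.1 = true → χ.1 = χ.2.2.1 ∧ χ.2.2.2 = 0))

/-- The state space `𝔛` of the extended chain. -/
abbrev ExtState (NN T : ℕ) [NeZero T] (f : Fin MM → Bool) : Type :=
  {χ : XT NN MM T // inX f χ}

/-- The transition matrix `p̄` of the extended chain on `𝔛`. -/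
def extTransition (P : Matrix (Fin NN) (Fin NN) ℝ) (Q : Matrix (Fin MM) (Fin MM) ℝ)
    (f : Fin MM → Bool) (χ χ' : ExtState NN T f) : ℝ :=
  pbar P Q f χ.1 χ'.1

/-- The closed-loop matrices `A_{K,χ}`, `χ ∈ 𝔛`. -/
def closedLoop (f : Fin MM → Bool) (A : Fin NN → Matrix (Fin n) (Fin n) ℝ)
    (B : Fin NN → Matrix (Fin n) (Fin m) ℝ) (K : Fin NN → Fin T → Matrix (Fin m) (Fin n) ℝ)
    (χ : ExtState NN T f) : Matrix (Fin n) (Fin n) ℝ :=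
  AKmat A B K χ.1

variable {A : Fin NN → Matrix (Fin n) (Fin n) ℝ} {B : Fin NN → Matrix (Fin n) (Fin m) ℝ}
  {E : Fin NN → Matrix (Fin n) (Fin q) ℝ} {K : Fin NN → Fin T → Matrix (Fin m) (Fin n) ℝ}

theorem Dop_eq_covOp (Z : XT NN MM T → Matrix (Fin n) (Fin n) ℝ) (χ : ExtState NN T f) :
    Dop P Q f (fun χ' => AKmat A B K χ' * Z χ' * (AKmat A B K χ')ᵀ) χ
      = covOp (extTransition P Q f) (closedLoop f A B K) (fun χ' => Z χ') χ := by
  calc _ = ∑ χ' with inX f χ',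
          pbar P Q f χ' χ • (AKmat A B K χ' * Z χ' * (AKmat A B K χ')ᵀ) := by
        rw [Dop, Finset.sum_filter]
        congr!
    _ = _ := by
        rw [covOp_apply, Finset.sum_subtype (p := inX f) _ (by simp)]
        rfl

theorem exists_lyapunov_inX_iff :
    (∃ Z : XT NN MM T → Matrix (Fin n) (Fin n) ℝ, (∀ χ, inX f χ → (Z χ).PosDef) ∧
        ∀ χ, inX f χ →
          (Z χ - Dop P Q f (fun χ' => AKmat A B K χ' * Z χ' * (AKmat A B K χ')ᵀ) χ).PosDef) ↔
      ∃ Z : ExtState NN T f → Matrix (Fin n) (Fin n) ℝ, (∀ χ, (Z χ).PosDef) ∧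
        ∀ χ, (Z χ - covOp (extTransition P Q f) (closedLoop f A B K) Z χ).PosDef := by
  constructor
  · rintro ⟨Z, hZ, hlyap⟩
    refine ⟨fun χ => Z χ, fun χ => hZ χ χ.2, fun χ => ?_⟩
    rw [← Dop_eq_covOp]
    exact hlyap χ χ.2
  · rintro ⟨Z, hZ, hlyap⟩
    let Z' : XT NN MM T → Matrix (Fin n) (Fin n) ℝ := Function.extend Subtype.val Z 0
    have hZ' (χ : ExtState NN T f) : Z' χ = Z χ := Subtype.val_injective.extend_apply Z 0 χ
    refine ⟨Z', fun χ hχ => ?_, fun χ hχ => ?_⟩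
    · rw [hZ' ⟨χ, hχ⟩]
      exact hZ _
    · rw [Dop_eq_covOp Z' ⟨χ, hχ⟩, hZ' ⟨χ, hχ⟩, funext hZ']
      exact hlyap _

theorem lintegral_sqE_traj (S : ThetaReal NN MM T P Q f) {χ : ExtState NN T f}
    (h0 : ∀ᵐ ω ∂S.μ, S.θ 0 ω = χ) (x0 : Fin n → ℝ) (k : ℕ) :
    ∫⁻ ω, sqE (traj (AKmat A B K) (fun χ' => E χ'.1) S.θ (fun _ _ => 0) x0 k ω) ∂S.μ
      = ENNReal.ofReal (totalTrace ((covOp (extTransition P Q f) (closedLoop f A B K) ^ k)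
          (Pi.single χ (vecMulVec x0 x0)))) := by
  let _ := S.inst
  have := S.prob
  let X (k : ℕ) (ω : S.Ω) : ExtState NN T f := ⟨S.θ k ω, S.mem k ω⟩
  have hX (k : ℕ) : Measurable (X k) := (S.meas k).subtype_mk
  have hM : IsMarkovChain S.μ X (extTransition P Q f) :=
    IsMarkovChain.of_comp_injective Subtype.val_injective S.markov
  have hX0 : ∀ᵐ ω ∂S.μ, X 0 ω = χ := h0.mono fun ω hω => Subtype.ext hω
  rw [← secondMoment_eq_covOp_pow hM hX hX0, ← lintegral_stateAlong hX]
  refine lintegral_congr fun ω => ?_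
  rw [traj_zero_noise, sqE]
  exact congrArg (fun v : Fin n → ℝ => ENNReal.ofReal (∑ a, v a ^ 2))
    (stateAlong_comp (AKmat A B K) Subtype.val x0 k fun l => X l ω)

/-- The extended process `r̄` of a realization of `(r, s)`, as a realization of `θ`. -/
def rbarReal (S : MJLSReal NN MM P Q) (f : Fin MM → Bool) (τ₀ : ℤ) (σ₀ : Fin NN) :
    ThetaReal NN MM T P Q f :=
  let _ := S.inst
  { Ω := S.Ω
    inst := S.inst
    μ := S.μ
    prob := S.prob
    θ := rbarProc S.r S.s f τ₀ σ₀
    meas := measurable_rbarProc f τ₀ σ₀ S.meas_r S.meas_s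
    mem := inX_rbarProc S.r S.s f τ₀ σ₀
    markov := isMarkovChain_rbarProc f τ₀ σ₀ S.markov_r S.markov_s S.indep }

theorem MeanSquareStableBar.meanSquareStable (h : MeanSquareStableBar P Q f A B E K) :
    MeanSquareStable P Q f A B E K := by
  obtain ⟨c, hc, lam, hlam0, hlam1, bound⟩ := h
  refine ⟨c, hc, lam, hlam0, hlam1, fun S τ₀ _ σ₀ r₀ s₀ h0 => ?_⟩
  refine bound (rbarReal S f τ₀ σ₀) (r₀, s₀, memoryInit f τ₀ σ₀ (r₀, s₀)) (fun hs => ?_) ?_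
  · simp [memoryInit, hs]
  · filter_upwards [h0] with ω ⟨hr, hs⟩
    refine Prod.ext hr (Prod.ext hs ?_)
    rw [← hr, ← hs]
    exact rbarProc_memory_zero _ _ _ _ _ _

theorem CovStable.meanSquareStableBar
    (h : CovStable (extTransition P Q f) (closedLoop f A B K)) :
    MeanSquareStableBar P Q f A B E K := by
  obtain ⟨c, hc, lam, hlam0, hlam1, bound⟩ := h
  refine ⟨c, hc, lam, hlam0, hlam1, fun S χ hχ h0 x0 k => ?_⟩
  rw [lintegral_sqE_traj (χ := ⟨χ, hχ⟩) S h0]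
  refine ENNReal.ofReal_le_ofReal ?_
  simpa only [dotProduct, ← sq] using bound ⟨χ, hχ⟩ x0 k

theorem exists_rbarProc_zero_ae_eq (hP0 : ∀ i j, 0 ≤ P i j) (hP1 : ∀ i, ∑ j, P i j = 1)
    (hQ0 : ∀ i j, 0 ≤ Q i j) (hQ1 : ∀ i, ∑ j, Q i j = 1) (χ : ExtState NN T f) :
    ∃ (S : MJLSReal NN MM P Q) (τ₀ : ℤ) (σ₀ r₀ : Fin NN) (s₀ : Fin MM), τ₀ ≤ 0 ∧
      (∀ᵐ ω ∂S.μ, S.r 0 ω = r₀ ∧ S.s 0 ω = s₀) ∧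
      ∀ᵐ ω ∂S.μ, rbarProc S.r S.s f τ₀ σ₀ 0 ω = (χ : XT NN MM T) := by
  obtain ⟨⟨α, β, γ, δ⟩, hχ⟩ := χ
  obtain ⟨S, h0⟩ := exists_mjlsReal hP0 hP1 hQ0 hQ1 α β
  refine ⟨S, -δ.val, γ, α, β, by simp, h0, h0.mono fun ω ⟨hr, hs⟩ => ?_⟩
  refine Prod.ext hr (Prod.ext hs ?_)
  rw [rbarProc_memory_zero, hr, hs, memoryInit, neg_neg, intToFin_val]
  split_ifs with hβ
  · exact Prod.ext (hχ hβ).1 (hχ hβ).2.symm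
  · rfl

theorem MeanSquareStable.covStable (hP0 : ∀ i j, 0 ≤ P i j) (hP1 : ∀ i, ∑ j, P i j = 1)
    (hQ0 : ∀ i j, 0 ≤ Q i j) (hQ1 : ∀ i, ∑ j, Q i j = 1) (h : MeanSquareStable P Q f A B E K) :
    CovStable (extTransition P Q f) (closedLoop f A B K) := by
  obtain ⟨c, hc, lam, hlam0, hlam1, bound⟩ := h
  refine ⟨c, hc, lam, hlam0, hlam1, fun χ x k => ?_⟩
  obtain ⟨S, τ₀, σ₀, r₀, s₀, hτ₀, h0, hχ⟩ := exists_rbarProc_zero_ae_eq hP0 hP1 hQ0 hQ1 χ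
  have hk : _ ≤ _ := (lintegral_sqE_traj (E := E) (rbarReal S f τ₀ σ₀) hχ x k).symm.trans_le
    (bound S τ₀ hτ₀ σ₀ r₀ s₀ h0 x k)
  rw [ENNReal.ofReal_le_ofReal_iff (by positivity)] at hk
  simpa only [dotProduct, ← sq] using hk

end ClosedLoop

/-- equivalence of (i) mean square stability of `Σ_K`, (ii) mean square
stability of `Σ̄_K`, and (iii) existence of positive definite `Q_χ` with
`Q_χ - D̄_χ(A_K Q A_Kᵀ) > 0` for all `χ ∈ 𝔛`. -/
theorem mss_characterization
    {NN MM T n m q : ℕ} [NeZero NN] [NeZero MM] [NeZero T]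
    [NeZero n] [NeZero m] [NeZero q]
    (P : Matrix (Fin NN) (Fin NN) ℝ) (Qm : Matrix (Fin MM) (Fin MM) ℝ)
    (hP0 : ∀ i j, 0 ≤ P i j) (hP1 : ∀ i, ∑ j, P i j = 1)
    (hQ0 : ∀ i j, 0 ≤ Qm i j) (hQ1 : ∀ i, ∑ j, Qm i j = 1)
    (f : Fin MM → Bool)
    (A : Fin NN → Matrix (Fin n) (Fin n) ℝ) (B : Fin NN → Matrix (Fin n) (Fin m) ℝ)
    (E : Fin NN → Matrix (Fin n) (Fin q) ℝ)
    (K : Fin NN → Fin T → Matrix (Fin m) (Fin n) ℝ) :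
    (MeanSquareStable P Qm f A B E K ↔ MeanSquareStableBar P Qm f A B E K)
    ∧ (MeanSquareStableBar P Qm f A B E K ↔
        ∃ Qmat : XT NN MM T → Matrix (Fin n) (Fin n) ℝ,
          (∀ χ, inX f χ → (Qmat χ).PosDef) ∧
          ∀ χ, inX f χ →
            (Qmat χ - Dop P Qm f
              (fun χ' => AKmat A B K χ' * Qmat χ' * (AKmat A B K χ')ᵀ) χ).PosDef) := by
  have hp (χ χ' : ExtState NN T f) : 0 ≤ extTransition P Qm f χ χ' := pbar_nonneg f hP0 hQ0 _ _
  have toCov (h : MeanSquareStable P Qm f A B E K) :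
      CovStable (extTransition P Qm f) (closedLoop f A B K) := h.covStable hP0 hP1 hQ0 hQ1
  rw [exists_lyapunov_inX_iff, ← covStable_iff_lyapunov hp]
  exact ⟨⟨fun h => (toCov h).meanSquareStableBar, fun h => h.meanSquareStable⟩,
    ⟨fun h => toCov h.meanSquareStable, fun h => h.meanSquareStableBar⟩⟩

end
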